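/- For all integers n ≥ 2 and m ≥ 1, γ̃_{n,m} < γ̃_{n-1,m}; that is, for each fixed m ≥ 1 the sequence n ↦ γ̃_{n,m} is strictly decreasing. -/

import Mathlib

/-- The series `c_{n,m} = ∑_{k≥0} binom(k+n-1, k) / (2k+n)^{n+m}`. -/
noncomputable def seriesC (n m : ℕ) : ℝ :=
  ∑' k : ℕ, ((k + n - 1).choose k : ℝ) / (2 * (k : ℝ) + n) ^ (n + m)

/-- `γ̃_{n,m}`. -/
noncomputable def gammaTilde (n m : ℕ) : ℝ :=
  (1 / (2 : ℝ) ^ ((n : ℤ) - m + 1)) *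
    (((n : ℝ) + m) / ((n : ℝ) ^ (n + m) * ((n : ℝ) + m - 1) ^ (n + m))) *
    (Real.Gamma ((m : ℝ) / 2) * Real.Gamma (2 * (n : ℝ) + m) /
      Real.Gamma ((n : ℝ) + m / 2)) *
    (1 / seriesC n m)

theorem aux_bern (x : ℝ) (hx : 0 ≤ x) (k : ℕ) :
    1 + k * x + k * (k - 1) / 2 * x ^ 2 ≤ (1 + x) ^ k := by
  induction k with
  | zero => simp
  | succ k ih =>
    rw [pow_succ]
    have h := mul_le_mul_of_nonneg_right ih (by linarith : (0 : ℝ) ≤ 1 + x)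
    refine le_trans ?_ h
    push_cast
    have h2 : (0 : ℝ) ≤ k * (k - 1) := by
      rcases Nat.eq_zero_or_pos k with h0 | h0
      · simp [h0]
      · have : (1 : ℝ) ≤ k := by exact_mod_cast h0
        exact mul_nonneg (by linarith) (by linarith)
    have h3 : 0 ≤ (k : ℝ) * (k - 1) * x ^ 3 := mul_nonneg h2 (pow_nonneg hx 3)
    nlinarith [h3]

theorem aux_num (q : ℕ) (hq : 1 ≤ q) :
    2 * ((q : ℝ) + 2) * (q : ℝ) ^ (q + 1) < ((q : ℝ) + 1) ^ (q + 2) := by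
  have hq' : (1 : ℝ) ≤ q := by exact_mod_cast hq
  have hq0 : (0 : ℝ) < q := by linarith
  have h := aux_bern (1 / (q : ℝ)) (by positivity) (q + 1)
  have e : ((q : ℝ) + 1) ^ (q + 2) = (q : ℝ) ^ (q + 1) * ((1 + 1 / (q : ℝ)) ^ (q + 1)) * (q + 1) := by
    rw [← mul_pow, pow_succ ((q : ℝ) + 1) (q + 1)]
    congr 2
    field_simp
  rw [e]
  have h2 : 2 * ((q : ℝ) + 2) < (1 + 1 / (q : ℝ)) ^ (q + 1) * (q + 1) := by
    refine lt_of_lt_of_le ?_ (mul_le_mul_of_nonneg_right h (by linarith : (0 : ℝ) ≤ (q : ℝ) + 1))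
    push_cast
    field_simp
    nlinarith
  have hp : (0 : ℝ) < (q : ℝ) ^ (q + 1) := by positivity
  nlinarith [mul_lt_mul_of_pos_left h2 hp]

theorem aux_summable (p m : ℕ) (hm : 1 ≤ m) :
    Summable (fun k : ℕ => ((k + (p + 1) - 1).choose k : ℝ) /
      (2 * (k : ℝ) + ((p + 1 : ℕ) : ℝ)) ^ (p + 1 + m)) := by
  have hs : Summable (fun k : ℕ => 1 / ((k + 1 : ℕ) : ℝ) ^ 2) :=
    (summable_nat_add_iff 1).2 (Real.summable_one_div_nat_pow.2 (by norm_num))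
  refine Summable.of_nonneg_of_le (fun k => by positivity) (fun k => ?_) hs
  have h1 : ((k + (p + 1) - 1).choose k : ℝ) ≤ (2 * (k : ℝ) + ((p + 1 : ℕ) : ℝ)) ^ p := by
    have e : (k + (p + 1) - 1).choose k = (k + p).choose p := by
      rw [show k + (p + 1) - 1 = k + p by omega]
      exact Nat.choose_symm_add
    rw [e]
    have : (k + p).choose p ≤ (2 * k + (p + 1)) ^ p :=
      (Nat.choose_le_pow _ _).trans (Nat.pow_le_pow_left (by omega) p)
    exact_mod_cast this
  have hx : (1 : ℝ) ≤ 2 * (k : ℝ) + ((p + 1 : ℕ) : ℝ) := by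
    push_cast
    linarith [(Nat.cast_nonneg k : (0 : ℝ) ≤ k), (Nat.cast_nonneg p : (0 : ℝ) ≤ p)]
  have hx2 : ((k + 1 : ℕ) : ℝ) ≤ 2 * (k : ℝ) + ((p + 1 : ℕ) : ℝ) := by
    push_cast
    linarith [(Nat.cast_nonneg k : (0 : ℝ) ≤ k), (Nat.cast_nonneg p : (0 : ℝ) ≤ p)]
  generalize 2 * (k : ℝ) + ((p + 1 : ℕ) : ℝ) = X at *
  have hX : 0 < X := by linarith
  rw [div_le_div_iff₀ (by positivity) (by positivity), one_mul]
  calc _ ≤ X ^ p * X ^ 2 := by gcongr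
    _ = X ^ (p + 2) := by ring
    _ ≤ X ^ (p + 1 + m) := pow_le_pow_right₀ hx (by omega)

theorem aux_term (p m k : ℕ) (hp : 1 ≤ p) (hm : 1 ≤ m) :
    (p : ℝ) ^ (p + m) * (((k + p - 1).choose k : ℝ) / (2 * (k : ℝ) + p) ^ (p + m)) ≤
    ((p : ℝ) + 1) ^ (p + m + 1) * (((k + (p + 1) - 1).choose k : ℝ) /
      (2 * (k : ℝ) + ((p + 1 : ℕ) : ℝ)) ^ (p + 1 + m)) := by
  have hp' : (1 : ℝ) ≤ p := by exact_mod_cast hp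
  have hk : (0 : ℝ) ≤ k := Nat.cast_nonneg k
  have hch : ((k + (p + 1) - 1).choose k : ℝ) * p = ((k + p - 1).choose k : ℝ) * (k + p) := by
    obtain ⟨r, rfl⟩ : ∃ r, p = r + 1 := ⟨p - 1, by omega⟩
    rw [show k + (r + 1 + 1) - 1 = k + r + 1 by omega, show k + (r + 1) - 1 = k + r by omega]
    have := Nat.choose_mul_succ_eq (k + r) k
    rw [show k + r + 1 - k = r + 1 by omega] at this
    have h2 : ((k + r + 1).choose k : ℝ) * ((r + 1 : ℕ) : ℝ) =
      ((k + r).choose k : ℝ) * ((k + r + 1 : ℕ) : ℝ) := by exact_mod_cast this.symm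
    rw [h2]; push_cast; ring
  have hc1 : ((k + (p + 1) - 1).choose k : ℝ) = ((k + p - 1).choose k : ℝ) * (k + p) / p := by
    rw [← hch]; field_simp
  rw [hc1]
  have hC : (0 : ℝ) ≤ ((k + p - 1).choose k : ℝ) := Nat.cast_nonneg _
  generalize ((k + p - 1).choose k : ℝ) = C at *
  clear hch hc1
  push_cast
  set P : ℝ := (p : ℝ) with hP
  set K : ℝ := (k : ℝ)
  have hA : 0 < 2 * K + P := by linarith
  have hB : 0 < 2 * K + (P + 1) := by linarith
  have hB' : 0 < (2 * K + (P + 1)) * P := by positivity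
  have key : P * (2 * K + (P + 1)) ≤ (P + 1) * (K + P) *
      ((P + 1) * (2 * K + P) / ((2 * K + (P + 1)) * P)) ^ (p + m) := by
    have e : (P + 1) * (2 * K + P) / ((2 * K + (P + 1)) * P)
        = 1 + 2 * K / ((2 * K + (P + 1)) * P) := by
      field_simp
      ring
    have hz : 0 ≤ 2 * K / ((2 * K + (P + 1)) * P) := by positivity
    have h1 := one_add_mul_le_pow (a := 2 * K / ((2 * K + (P + 1)) * P)) (by linarith) (p + m)
    rw [e]
    have h2 : 1 + (P + 1) * (2 * K / ((2 * K + (P + 1)) * P)) ≤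
        (1 + 2 * K / ((2 * K + (P + 1)) * P)) ^ (p + m) := by
      refine le_trans ?_ h1
      have : P + 1 ≤ ((p + m : ℕ) : ℝ) := by
        rw [hP]; exact_mod_cast (by omega : p + 1 ≤ p + m)
      gcongr
    have h3 : P * (2 * K + (P + 1)) ≤ (P + 1) * (K + P) *
        (1 + (P + 1) * (2 * K / ((2 * K + (P + 1)) * P))) := by
      have e2 : 1 + (P + 1) * (2 * K / ((2 * K + (P + 1)) * P)) =
        ((2 * K + (P + 1)) * P + (P + 1) * (2 * K)) / ((2 * K + (P + 1)) * P) := by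
        field_simp
      rw [e2, ← mul_div_assoc, le_div_iff₀ hB']
      have hP0 : 0 ≤ P - 1 := by linarith
      obtain ⟨s, hs⟩ : ∃ s, P = s + 1 := ⟨P - 1, by ring⟩
      have hs0 : 0 ≤ s := by linarith
      rw [hs]
      rw [← sub_nonneg]
      ring_nf
      positivity
    exact h3.trans (mul_le_mul_of_nonneg_left h2 (by positivity))
  rw [div_pow, mul_pow, mul_pow, ← mul_div_assoc, le_div_iff₀ (by positivity)] at key
  rw [← mul_div_assoc, ← mul_div_assoc, div_le_div_iff₀ (by positivity) (by positivity),
    ← mul_div_assoc, div_mul_eq_mul_div, le_div_iff₀ (by linarith)]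
  rw [show p + 1 + m = p + m + 1 by ring, pow_succ (2 * K + (P + 1)), pow_succ (P + 1)]
  have := mul_le_mul_of_nonneg_left key hC
  linarith [this]

theorem aux_sum (p m : ℕ) (hp : 1 ≤ p) (hm : 1 ≤ m) :
    (p : ℝ) ^ (p + m) * seriesC p m ≤ ((p : ℝ) + 1) ^ (p + m + 1) * seriesC (p + 1) m := by
  unfold seriesC
  rw [← tsum_mul_left, ← tsum_mul_left]
  refine Summable.tsum_le_tsum (fun k => aux_term p m k hp hm) ?_ ?_
  · obtain ⟨r, rfl⟩ : ∃ r, p = r + 1 := ⟨p - 1, by omega⟩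
    exact (aux_summable r m hm).mul_left _
  · exact (aux_summable p m hm).mul_left _

theorem aux_pos (p m : ℕ) (hp : 1 ≤ p) (hm : 1 ≤ m) : 0 < seriesC p m := by
  obtain ⟨r, rfl⟩ : ∃ r, p = r + 1 := ⟨p - 1, by omega⟩
  exact (aux_summable r m hm).tsum_pos (fun k => by positivity) 0 (by simp; positivity)

theorem gammaTilde_strict_decreasing_in_n (n m : ℕ) (hn : 2 ≤ n) (hm : 1 ≤ m) :
    gammaTilde n m < gammaTilde (n - 1) m := by
  obtain ⟨p, rfl⟩ : ∃ p, n = p + 1 := ⟨n - 1, by omega⟩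
  have hp : 1 ≤ p := by omega
  rw [Nat.add_sub_cancel]
  have hS := aux_sum p m hp hm
  have hc := aux_pos p m hp hm
  have hc' := aux_pos (p + 1) m (by omega) hm
  have hp' : (1 : ℝ) ≤ p := by exact_mod_cast hp
  have hm' : (1 : ℝ) ≤ m := by exact_mod_cast hm
  unfold gammaTilde
  generalize seriesC p m = c at *
  generalize seriesC (p + 1) m = c' at *
  have hT : (2 : ℝ) ^ (((p + 1 : ℕ) : ℤ) - m + 1) = 2 * (2 : ℝ) ^ ((p : ℤ) - m + 1) := by
    rw [← zpow_one_add₀ (by norm_num)]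
    congr 1
    push_cast
    ring
  have hG1 : Real.Gamma (2 * ((p + 1 : ℕ) : ℝ) + m) =
      (2 * p + m + 1) * ((2 * p + m) * Real.Gamma (2 * (p : ℝ) + m)) := by
    rw [← Real.Gamma_add_one (by positivity), ← Real.Gamma_add_one (by positivity)]
    congr 1
    push_cast
    ring
  have hG2 : Real.Gamma (((p + 1 : ℕ) : ℝ) + m / 2) =
      (p + m / 2) * Real.Gamma ((p : ℝ) + m / 2) := by
    rw [← Real.Gamma_add_one (by positivity)]
    congr 1
    push_cast
    ring
  rw [hT, hG1, hG2]
  have g1 : 0 < Real.Gamma ((m : ℝ) / 2) := Real.Gamma_pos_of_pos (by positivity)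
  have g2 : 0 < Real.Gamma (2 * (p : ℝ) + m) := Real.Gamma_pos_of_pos (by positivity)
  have g3 : 0 < Real.Gamma ((p : ℝ) + m / 2) := Real.Gamma_pos_of_pos (by positivity)
  have hT0 : (0 : ℝ) < (2 : ℝ) ^ ((p : ℤ) - m + 1) := by positivity
  generalize Real.Gamma ((m : ℝ) / 2) = A at *
  generalize Real.Gamma (2 * (p : ℝ) + m) = B at *
  generalize Real.Gamma ((p : ℝ) + m / 2) = D at *
  generalize (2 : ℝ) ^ ((p : ℤ) - m + 1) = T at *
  obtain ⟨q, hq⟩ : ∃ q, p + m = q + 1 := ⟨p + m - 1, by omega⟩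
  have hq1 : 1 ≤ q := by omega
  have hqr : (p : ℝ) + m = q + 1 := by exact_mod_cast hq
  have hnum := aux_num q hq1
  have hq' : (1 : ℝ) ≤ q := by exact_mod_cast hq1
  rw [show p + 1 + m = q + 2 by omega]
  rw [hq] at hS ⊢
  have hpq : (p : ℝ) ≤ q := by linarith
  push_cast
  rw [show (p : ℝ) + 1 + m = q + 2 by linarith, show (q : ℝ) + 2 - 1 = q + 1 by ring, hqr,
    show (q : ℝ) + 1 - 1 = q by ring, show 2 * (p : ℝ) + m + 1 = q + p + 2 by linarith]
  rw [show q + 1 + 1 = q + 2 by ring] at hS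
  have hL : 1 / (2 * T) * (((q : ℝ) + 2) / (((p : ℝ) + 1) ^ (q + 2) * ((q : ℝ) + 1) ^ (q + 2))) *
      (A * ((q + p + 2) * ((2 * p + m) * B)) / ((p + m / 2) * D)) * (1 / c') =
      (A * B / (D * T)) * (((q : ℝ) + 2) * (q + p + 2) / (((p : ℝ) + 1) ^ (q + 2) * c' * ((q : ℝ) + 1) ^ (q + 2))) := by
    have : (p : ℝ) + m / 2 ≠ 0 := by positivity
    have h2 : 2 * (p : ℝ) + m = 2 * (p + m / 2) := by ring
    rw [h2]
    field_simp
  have hR : 1 / T * (((q : ℝ) + 1) / ((p : ℝ) ^ (q + 1) * (q : ℝ) ^ (q + 1))) * (A * B / D) * (1 / c) =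
      (A * B / (D * T)) * (((q : ℝ) + 1) / ((p : ℝ) ^ (q + 1) * c * (q : ℝ) ^ (q + 1))) := by
    field_simp
  rw [hL, hR]
  refine mul_lt_mul_of_pos_left ?_ (by positivity)
  have hpc : 0 < (p : ℝ) ^ (q + 1) * c := by positivity
  generalize (p : ℝ) ^ (q + 1) * c = u at *
  generalize ((p : ℝ) + 1) ^ (q + 2) * c' = v at *
  have hv : 0 < v := by linarith
  have hQ : (0 : ℝ) < (q : ℝ) ^ (q + 1) := by positivity
  have hQ2 : (0 : ℝ) < ((q : ℝ) + 1) ^ (q + 2) := by positivity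
  rw [div_lt_div_iff₀ (by positivity) (by positivity)]
  generalize (q : ℝ) ^ (q + 1) = x at *
  generalize ((q : ℝ) + 1) ^ (q + 2) = y at *
  calc ((q : ℝ) + 2) * (q + p + 2) * (u * x) ≤ ((q : ℝ) + 2) * (q + q + 2) * (v * x) := by gcongr
    _ = (q + 1) * v * (2 * (q + 2) * x) := by ring
    _ < (q + 1) * v * y := mul_lt_mul_of_pos_left hnum (by positivity)
    _ = _ := by ring
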